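/- arXiv:2601.13805 — 8 statements merged into one kernel-verified Lean document; each statement's English description precedes it below -/
import Mathlib

section
/- Let I be an ideal on ℕ, let X be a metric space with the UC-property, and let 𝓕 be a rough family on X all of whose members are closed sets. Assume there exist a point η ∈ X and a sequence y : ℕ → X such that y converges to η and y k ∉ F_η for all k ∈ ℕ. Then I is a P-ideal if and only if Lim_x(I*,𝓕) = Lim_x(I,𝓕) for every sequence x : ℕ → X. -/
open Set Filter Topology Metric

def IsIdeal (I : Set (Set ℕ)) : Prop :=
  (∀ A B : Set ℕ, A ⊆ B → B ∈ I → A ∈ I) ∧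
  (∀ A B : Set ℕ, A ∈ I → B ∈ I → A ∪ B ∈ I) ∧
  (∀ A : Set ℕ, A.Finite → A ∈ I) ∧
  (Set.univ : Set ℕ) ∉ I

def IsRoughFamily {X : Type*} (F : X → Set X) : Prop :=
  ∀ η : X, η ∈ F η

def RoughLim {X : Type*} [TopologicalSpace X] (I : Set (Set ℕ)) (F : X → Set X)
    (x : ℕ → X) : Set X :=
  {η : X | ∀ U : Set X, IsOpen U → F η ⊆ U → {n : ℕ | x n ∉ U} ∈ I}

def RoughLimStar {X : Type*} [TopologicalSpace X] (I : Set (Set ℕ)) (F : X → Set X)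
    (x : ℕ → X) : Set X :=
  {η : X | ∃ S ∈ I, ∀ U : Set X, IsOpen U → F η ⊆ U → {n : ℕ | n ∉ S ∧ x n ∉ U}.Finite}

def RoughCluster {X : Type*} [TopologicalSpace X] (I : Set (Set ℕ)) (F : X → Set X)
    (x : ℕ → X) : Set X :=
  {η : X | ∀ U : Set X, IsOpen U → F η ⊆ U → {n : ℕ | x n ∈ U} ∉ I}

def RoughLimitPts {X : Type*} [TopologicalSpace X] (I : Set (Set ℕ)) (F : X → Set X)
    (x : ℕ → X) : Set X :=
  {η : X | ∃ S : Set ℕ, S ∉ I ∧ ∀ U : Set X, IsOpen U → F η ⊆ U → {n ∈ S | x n ∉ U}.Finite}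

def IClusterPts {X : Type*} [TopologicalSpace X] (I : Set (Set ℕ)) (x : ℕ → X) : Set X :=
  RoughCluster I (fun η => {η}) x

def ILimitPts {X : Type*} [TopologicalSpace X] (I : Set (Set ℕ)) (x : ℕ → X) : Set X :=
  RoughLimitPts I (fun η => {η}) x

def IsPIdeal (I : Set (Set ℕ)) : Prop :=
  ∀ S : ℕ → Set ℕ, Monotone S → (∀ j, S j ∈ I) → ∃ T ∈ I, ∀ j, (S j \ T).Finite

def IsPPlusIdeal (I : Set (Set ℕ)) : Prop :=
  ∀ A : ℕ → Set ℕ, Antitone A → (∀ k, A k ∉ I) → ∃ B : Set ℕ, B ∉ I ∧ ∀ k, (B \ A k).Finite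

def HasUCProperty (X : Type*) [MetricSpace X] : Prop :=
  ∀ F G : Set X, IsClosed F → IsClosed G → F.Nonempty → G.Nonempty → Disjoint F G →
    ∃ ε : ℝ, 0 < ε ∧ ∀ x ∈ F, ∀ y ∈ G, ε < dist x y

def UpperVietorisContinuous {X : Type*} [TopologicalSpace X] (F : X → Set X) : Prop :=
  ∀ η : X, ∀ U : Set X, IsOpen U → F η ⊆ U →
    ∃ V : Set X, IsOpen V ∧ η ∈ V ∧ ∀ lam ∈ V, F lam ⊆ U

/-!
Let `L` be the filter dual to `I`. Then `(I, 𝓕)`-convergence to `η` is convergence along `L` to the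
neighbourhood filter of `F η`, while `(I*, 𝓕)`-convergence is convergence to it along
`cofinite ⊓ 𝓟 Sᶜ`, a filter finer than `cofinite` and coarser than `L`, for some `S ∈ I`.

If `I` is a P-ideal, convergence along `L` to a filter with a countable basis `U₀ ⊇ U₁ ⊇ ⋯` is of
the second kind: apply the P-property to the exceptional sets `{n | x n ∉ U j}`. The UC-property
makes the thickenings of a closed set a basis of its neighbourhoods.

Conversely, an increasing sequence `S` in `I` is encoded by `f : ℕ → ℕ` tending to infinity along
`L` with `f ≤ j` on `S j`. Then `y ∘ f` tends to `η` along `L`, hence to `F η` along some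
`cofinite ⊓ 𝓟 Tᶜ`. As `F η` has a neighbourhood missing any given finitely many `y k`, `f` tends to
infinity along `cofinite ⊓ 𝓟 Tᶜ`, which says that every `S j \ T` is finite.
-/

namespace IsIdeal

variable {I : Set (Set ℕ)} {X : Type*}

/-- The filter dual to an ideal on `ℕ`: its members are the complements of the members of `I`.
It turns `(I, 𝓕)`-convergence into a `Tendsto` statement. -/
def dualFilter (hI : IsIdeal I) : Filter ℕ :=
  comk (· ∈ I) (hI.2.2.1 ∅ finite_empty) (fun B hB A hAB => hI.1 A B hAB hB)
    (fun A hA B hB => hI.2.1 A B hA hB)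

theorem mem_dualFilter (hI : IsIdeal I) {A : Set ℕ} : A ∈ hI.dualFilter ↔ Aᶜ ∈ I :=
  mem_comk

theorem dualFilter_le_cofinite_inf_principal (hI : IsIdeal I) {S : Set ℕ} (hS : S ∈ I) :
    hI.dualFilter ≤ cofinite ⊓ 𝓟 Sᶜ :=
  le_inf (fun _ hA => hI.mem_dualFilter.2 (hI.2.2.1 _ hA))
    (le_principal_iff.2 (hI.mem_dualFilter.2 (by rwa [compl_compl])))

theorem mem_roughLim_iff [TopologicalSpace X] (hI : IsIdeal I) {F : X → Set X} {x : ℕ → X}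
    {η : X} : η ∈ RoughLim I F x ↔ Tendsto x hI.dualFilter (𝓝ˢ (F η)) := by
  rw [(hasBasis_nhdsSet (F η)).tendsto_right_iff]
  exact ⟨fun h U hU => hI.mem_dualFilter.2 (h U hU.1 hU.2),
    fun h U hUo hFU => hI.mem_dualFilter.1 (h U ⟨hUo, hFU⟩)⟩

end IsIdeal

theorem tendsto_cofinite_inf_principal_compl_iff {α β ι : Type*} {l : Filter β} {p : ι → Prop}
    {U : ι → Set β} (hl : l.HasBasis p U) {x : α → β} {S : Set α} :
    Tendsto x (cofinite ⊓ 𝓟 Sᶜ) l ↔ ∀ i, p i → {n | n ∉ S ∧ x n ∉ U i}.Finite := by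
  simp only [hl.tendsto_right_iff, eventually_inf_principal, eventually_cofinite, mem_compl_iff,
    Classical.not_imp]

theorem mem_roughLimStar_iff {X : Type*} [TopologicalSpace X] {I : Set (Set ℕ)} {F : X → Set X}
    {x : ℕ → X} {η : X} :
    η ∈ RoughLimStar I F x ↔ ∃ S ∈ I, Tendsto x (cofinite ⊓ 𝓟 Sᶜ) (𝓝ˢ (F η)) := by
  simp only [tendsto_cofinite_inf_principal_compl_iff (hasBasis_nhdsSet (F η)), and_imp]
  rfl

theorem IsIdeal.roughLimStar_subset_roughLim {X : Type*} [TopologicalSpace X] {I : Set (Set ℕ)}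
    (hI : IsIdeal I) (F : X → Set X) (x : ℕ → X) : RoughLimStar I F x ⊆ RoughLim I F x := by
  intro η hη
  obtain ⟨S, hS, hx⟩ := mem_roughLimStar_iff.1 hη
  exact hI.mem_roughLim_iff.2 (hx.mono_left (hI.dualFilter_le_cofinite_inf_principal hS))

theorem IsPIdeal.exists_tendsto_cofinite_inf_principal_compl {β : Type*} {I : Set (Set ℕ)}
    (hP : IsPIdeal I) (hI : IsIdeal I) {l : Filter β} [l.IsCountablyGenerated] {x : ℕ → β}
    (hx : Tendsto x hI.dualFilter l) : ∃ T ∈ I, Tendsto x (cofinite ⊓ 𝓟 Tᶜ) l := by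
  obtain ⟨U, hU⟩ := l.exists_antitone_basis
  have exceptional_mono : Monotone fun j => {n | x n ∉ U j} :=
    fun _ _ hij _ hn hnU => hn (hU.antitone hij hnU)
  obtain ⟨T, hT, hfin⟩ :=
    hP _ exceptional_mono fun j => hI.mem_dualFilter.1 (hx (hU.mem j))
  refine ⟨T, hT, (tendsto_cofinite_inf_principal_compl_iff hU.toHasBasis).2 fun j _ => ?_⟩
  exact (hfin j).subset fun n hn => ⟨hn.2, hn.1⟩

theorem IsIdeal.exists_tendsto_dualFilter_atTop_of_monotone {I : Set (Set ℕ)} (hI : IsIdeal I)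
    {S : ℕ → Set ℕ} (hS : Monotone S) (hSI : ∀ j, S j ∈ I) :
    ∃ f : ℕ → ℕ, Tendsto f hI.dualFilter atTop ∧ ∀ j, ∀ n ∈ S j, f n ≤ j := by
  classical
  -- Adding `Iic j` to `S j` makes the sets cover `ℕ`, so that every `n` has a first index.
  have covered (n : ℕ) : ∃ j, n ∈ S j ∪ Iic j := ⟨n, Or.inr self_mem_Iic⟩
  refine ⟨fun n => Nat.find (covered n), tendsto_atTop.2 fun K => ?_,
    fun j n hn => Nat.find_min' (covered n) (Or.inl hn)⟩
  have enlarged_mem : S K ∪ Iic K ∈ I := hI.2.1 _ _ (hSI K) (hI.2.2.1 _ (finite_Iic K))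
  refine hI.mem_dualFilter.2 (hI.1 _ _ (fun n hn => ?_) enlarged_mem)
  have find_le : Nat.find (covered n) ≤ K := le_of_not_ge hn
  exact union_subset_union (hS find_le) (Iic_subset_Iic.2 find_le) (Nat.find_spec (covered n))

theorem tendsto_atTop_of_tendsto_comp_nhdsSet {α X : Type*} [TopologicalSpace X] [T1Space X]
    {l : Filter α} {s : Set X} {y : ℕ → X} (hy : ∀ k, y k ∉ s) {f : α → ℕ}
    (h : Tendsto (y ∘ f) l (𝓝ˢ s)) : Tendsto f l atTop := by
  refine tendsto_atTop.2 fun j => ?_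
  have avoids_initial : (y '' Iio j)ᶜ ∈ 𝓝ˢ s := by
    refine ((finite_Iio j).image y).isClosed.isOpen_compl.mem_nhdsSet.2 ?_
    rintro _ hp ⟨k, -, rfl⟩
    exact hy k hp
  filter_upwards [h avoids_initial] with n hn
  exact not_lt.1 fun hlt => hn (mem_image_of_mem y hlt)

theorem IsIdeal.isPIdeal_of_forall_tendsto_atTop {I : Set (Set ℕ)} (hI : IsIdeal I)
    (h : ∀ f : ℕ → ℕ, Tendsto f hI.dualFilter atTop →
      ∃ T ∈ I, Tendsto f (cofinite ⊓ 𝓟 Tᶜ) atTop) : IsPIdeal I := by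
  intro S hS hSI
  obtain ⟨f, hf, hfS⟩ := hI.exists_tendsto_dualFilter_atTop_of_monotone hS hSI
  obtain ⟨T, hT, hfT⟩ := h f hf
  refine ⟨T, hT, fun j => ?_⟩
  refine ((tendsto_cofinite_inf_principal_compl_iff atTop_basis).1 hfT (j + 1) trivial).subset ?_
  exact fun n ⟨hnS, hnT⟩ => ⟨hnT, not_le.2 (Nat.lt_succ_of_le (hfS j n hnS))⟩

theorem HasUCProperty.exists_thickening_subset {X : Type*} [MetricSpace X]
    (hUC : HasUCProperty X) {s U : Set X} (hs : IsClosed s) (hU : IsOpen U) (hsU : s ⊆ U) :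
    ∃ ε > 0, thickening ε s ⊆ U := by
  rcases s.eq_empty_or_nonempty with rfl | hs_ne
  · exact ⟨1, one_pos, by simp only [thickening_empty, empty_subset]⟩
  rcases Uᶜ.eq_empty_or_nonempty with hU_univ | hU_ne
  · exact ⟨1, one_pos, by simp only [compl_empty_iff.1 hU_univ, subset_univ]⟩
  obtain ⟨ε, hε, hdist⟩ :=
    hUC s Uᶜ hs hU.isClosed_compl hs_ne hU_ne (disjoint_compl_right_iff_subset.2 hsU)
  refine ⟨ε, hε, fun p hp => by_contra fun hpU => ?_⟩
  obtain ⟨z, hz, hpz⟩ := mem_thickening_iff.1 hp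
  exact (hdist z hz p hpU).not_gt (dist_comm p z ▸ hpz)

theorem HasUCProperty.isCountablyGenerated_nhdsSet {X : Type*} [MetricSpace X]
    (hUC : HasUCProperty X) {s : Set X} (hs : IsClosed s) : (𝓝ˢ s).IsCountablyGenerated := by
  have basis : (𝓝ˢ s).HasBasis (fun _ : ℕ => True) fun n => thickening (1 / (n + 1 : ℝ)) s := by
    refine (hasBasis_nhdsSet s).to_hasBasis' (fun U ⟨hU, hsU⟩ => ?_)
      fun n _ => thickening_mem_nhdsSet s Nat.one_div_pos_of_nat
    obtain ⟨ε, hε, hεU⟩ := hUC.exists_thickening_subset hs hU hsU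
    obtain ⟨n, hn⟩ := exists_nat_one_div_lt hε
    exact ⟨n, trivial, (thickening_mono hn.le s).trans hεU⟩
  exact HasCountableBasis.isCountablyGenerated ⟨basis, to_countable _⟩

theorem stmt0_general {X : Type*} [TopologicalSpace X] [T1Space X] {I : Set (Set ℕ)}
    (hI : IsIdeal I) {F : X → Set X} (hF : ∀ l, (𝓝ˢ (F l)).IsCountablyGenerated)
    {η : X} (hη : η ∈ F η) {y : ℕ → X} (hy : Tendsto y atTop (𝓝 η)) (hyF : ∀ k, y k ∉ F η) :
    IsPIdeal I ↔ ∀ x : ℕ → X, RoughLimStar I F x = RoughLim I F x := by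
  constructor
  · intro hP x
    refine (hI.roughLimStar_subset_roughLim F x).antisymm fun l hl => ?_
    have := hF l
    exact mem_roughLimStar_iff.2
      (hP.exists_tendsto_cofinite_inf_principal_compl hI (hI.mem_roughLim_iff.1 hl))
  · intro h
    refine hI.isPIdeal_of_forall_tendsto_atTop fun f hf => ?_
    have mem_lim : η ∈ RoughLim I F (y ∘ f) :=
      hI.mem_roughLim_iff.2 ((hy.comp hf).mono_right (nhds_le_nhdsSet hη))
    obtain ⟨T, hT, hyf⟩ := mem_roughLimStar_iff.1 ((h (y ∘ f)).symm ▸ mem_lim)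
    exact ⟨T, hT, tendsto_atTop_of_tendsto_comp_nhdsSet hyF hyf⟩

theorem stmt0 {X : Type*} [MetricSpace X] (hUC : HasUCProperty X)
    (I : Set (Set ℕ)) (hI : IsIdeal I)
    (F : X → Set X) (hF : IsRoughFamily F) (hFcl : ∀ η : X, IsClosed (F η))
    (η : X) (y : ℕ → X) (hy : Filter.Tendsto y Filter.atTop (nhds η))
    (hyF : ∀ k : ℕ, y k ∉ F η) :
    IsPIdeal I ↔ ∀ x : ℕ → X, RoughLimStar I F x = RoughLim I F x := by
  exact stmt0_general hI (fun l => hUC.isCountablyGenerated_nhdsSet (hFcl l)) (hF η) hy hyF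
end

section
/- Let I be an ideal on ℕ for which there exists a sequence of pairwise disjoint I-positive subsets of ℕ. Let X be a compact metric space and let 𝓕 be a rough family on X all of whose members are closed sets. Then the family of all sets of the form Γ_x(I,𝓕), as x ranges over all sequences ℕ → X, equals the family of all sets of the form {η ∈ X : F_η ∩ C ≠ ∅}, as C ranges over all nonempty closed subsets of X. -/
open Set Filter Topology Metric

/-! An ideal `I` is dual to a filter `l`, and `I`-cluster points of `x` are cluster points of `x`
along `l`. If every point of a compact set has a neighbourhood disjoint from some member of
`map x l`, then so does the whole set. Hence for compact `F η` the rough cluster set is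
`{η | F η ∩ C ≠ ∅}`, with `C` the closed set of ordinary cluster points, nonempty by compactness of
the space. Conversely, a nonempty closed separable `C` is the cluster set of any `C`-valued sequence
equal to the `k`-th point of a dense sequence of `C` on the `k`-th positive set. -/

open scoped Function

section ClusterAlongFilter

variable {α ι X : Type*} [TopologicalSpace X] {l : Filter α} {C : Set X}

theorem exists_forall_mem_eq_of_pairwise_disjoint [Nonempty ι] {A : ι → Set α}
    (hA : Pairwise (Disjoint on A)) : ∃ κ : α → ι, ∀ k, ∀ n ∈ A k, κ n = k := by
  refine ⟨fun n => Classical.epsilon fun k => n ∈ A k, fun k n hn => ?_⟩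
  have hmem : n ∈ A (Classical.epsilon fun k => n ∈ A k) :=
    Classical.epsilon_spec (p := fun k => n ∈ A k) ⟨k, hn⟩
  exact hA.eq (not_disjoint_iff.2 ⟨n, hmem, hn⟩)

theorem mapClusterPt_iff_mem_of_denseRange {x : α → X} {d : ι → C} (hC : IsClosed C)
    (hd : DenseRange d) (hx : ∀ n, x n ∈ C) (hfreq : ∀ k, ∃ᶠ n in l, x n = d k) {c : X} :
    MapClusterPt c l x ↔ c ∈ C := by
  refine ⟨fun hc => hC.mem_of_mapClusterPt hc (.of_forall hx), fun hc => ?_⟩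
  refine (nhds_basis_opens c).mapClusterPt_iff_frequently.2 fun U ⟨hcU, hU⟩ => ?_
  obtain ⟨k, hk⟩ : ∃ k, (d k : X) ∈ U :=
    hd.exists_mem_open (hU.preimage continuous_subtype_val) ⟨⟨c, hc⟩, hcU⟩
  exact (hfreq k).mono fun n hn => by rwa [hn]

theorem exists_forall_mapClusterPt_iff_mem {A : ℕ → Set α} (hA : ∀ k, ∃ᶠ n in l, n ∈ A k)
    (hdisj : Pairwise (Disjoint on A)) (hC : IsClosed C) (hne : C.Nonempty)
    [TopologicalSpace.SeparableSpace C] :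
    ∃ x : α → X, ∀ c, MapClusterPt c l x ↔ c ∈ C := by
  have : Nonempty C := hne.to_subtype
  obtain ⟨d, hd⟩ := TopologicalSpace.exists_dense_seq C
  obtain ⟨κ, hκ⟩ := exists_forall_mem_eq_of_pairwise_disjoint hdisj
  exact ⟨fun n => d (κ n), fun _ => mapClusterPt_iff_mem_of_denseRange hC hd (fun n => (d (κ n)).2)
    fun k => (hA k).mono fun n hn => by rw [hκ k n hn]⟩

end ClusterAlongFilter

section Ideal

variable {I : Set (Set ℕ)}

/-- The filter dual to the ideal `I`: its members are the complements of the members of `I`, so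
that a set is `I`-positive exactly when it meets every member of the filter. -/
def IsIdeal.dualFilter_s6 (hI : IsIdeal I) : Filter ℕ :=
  Filter.comk (· ∈ I) (hI.2.2.1 ∅ finite_empty) (fun B hB A hAB => hI.1 A B hAB hB)
    fun A hA B hB => hI.2.1 A B hA hB

theorem IsIdeal.frequently_dualFilter (hI : IsIdeal I) {p : ℕ → Prop} :
    (∃ᶠ n in hI.dualFilter_s6, p n) ↔ {n | p n} ∉ I := by
  simp only [Filter.Frequently, Filter.Eventually, IsIdeal.dualFilter_s6, Filter.mem_comk,
    compl_ofPred, not_not]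

theorem IsIdeal.neBot_dualFilter (hI : IsIdeal I) : hI.dualFilter_s6.NeBot :=
  frequently_true_iff_neBot _ |>.1 <| hI.frequently_dualFilter.2 hI.2.2.2

variable {X : Type*} [TopologicalSpace X] {F : X → Set X} {x : ℕ → X} {η : X}

theorem mem_roughCluster_iff_not_disjoint (hI : IsIdeal I) :
    η ∈ RoughCluster I F x ↔ ¬Disjoint (𝓝ˢ (F η)) (map x hI.dualFilter_s6) := by
  simp only [(hasBasis_nhdsSet (F η)).disjoint_iff_left, not_exists, not_and, and_imp, RoughCluster,
    mem_ofPred_eq, ← hI.frequently_dualFilter]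
  rfl

theorem mem_iClusterPts_iff_mapClusterPt (hI : IsIdeal I) :
    η ∈ IClusterPts I x ↔ MapClusterPt η hI.dualFilter_s6 x := by
  rw [IClusterPts, mem_roughCluster_iff_not_disjoint hI, nhdsSet_singleton, mapClusterPt_def,
    clusterPt_iff_not_disjoint]

theorem mem_roughCluster_iff_inter_iClusterPts_nonempty (hI : IsIdeal I) (hF : IsCompact (F η)) :
    η ∈ RoughCluster I F x ↔ (F η ∩ IClusterPts I x).Nonempty := by
  simp only [mem_roughCluster_iff_not_disjoint hI, hF.disjoint_nhdsSet_left, Set.Nonempty,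
    mem_inter_iff, mem_iClusterPts_iff_mapClusterPt hI, mapClusterPt_def,
    clusterPt_iff_not_disjoint, not_forall, exists_prop]

theorem isClosed_iClusterPts (hI : IsIdeal I) : IsClosed (IClusterPts I x) := by
  have hx : IClusterPts I x = {c | ClusterPt c (map x hI.dualFilter_s6)} :=
    ext fun _ => mem_iClusterPts_iff_mapClusterPt hI
  exact hx ▸ isClosed_setOfPred_clusterPt

theorem iClusterPts_nonempty [CompactSpace X] (hI : IsIdeal I) : (IClusterPts I x).Nonempty := by
  have := hI.neBot_dualFilter
  obtain ⟨c, hc⟩ := exists_clusterPt_of_compactSpace (map x hI.dualFilter_s6)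
  exact ⟨c, (mem_iClusterPts_iff_mapClusterPt hI).2 hc⟩

theorem exists_iClusterPts_eq (hI : IsIdeal I) {A : ℕ → Set ℕ} (hA : ∀ k, A k ∉ I)
    (hdisj : Pairwise (Disjoint on A)) {C : Set X} (hC : IsClosed C) (hne : C.Nonempty)
    [TopologicalSpace.SeparableSpace C] :
    ∃ x : ℕ → X, IClusterPts I x = C := by
  obtain ⟨x, hx⟩ := exists_forall_mapClusterPt_iff_mem
    (fun k => hI.frequently_dualFilter.2 (hA k)) hdisj hC hne
  exact ⟨x, ext fun c => (mem_iClusterPts_iff_mapClusterPt hI).trans (hx c)⟩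

end Ideal

theorem stmt6_general {X : Type*} [TopologicalSpace X] [CompactSpace X]
    (hsep : ∀ C : Set X, IsClosed C → TopologicalSpace.SeparableSpace C)
    (I : Set (Set ℕ)) (hI : IsIdeal I)
    (hdisj : ∃ A : ℕ → Set ℕ, (∀ n : ℕ, A n ∉ I) ∧
      (∀ m n : ℕ, m ≠ n → Disjoint (A m) (A n)))
    (F : X → Set X) (hF : ∀ η : X, IsCompact (F η)) :
    {S : Set X | ∃ x : ℕ → X, S = RoughCluster I F x} =
      {S : Set X | ∃ C : Set X, IsClosed C ∧ C.Nonempty ∧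
        S = {η : X | (F η ∩ C).Nonempty}} := by
  have roughCluster_eq (x : ℕ → X) :
      RoughCluster I F x = {η | (F η ∩ IClusterPts I x).Nonempty} :=
    ext fun η => mem_roughCluster_iff_inter_iClusterPts_nonempty hI (hF η)
  ext S
  constructor
  · rintro ⟨x, rfl⟩
    exact ⟨IClusterPts I x, isClosed_iClusterPts hI, iClusterPts_nonempty hI, roughCluster_eq x⟩
  · rintro ⟨C, hC, hne, rfl⟩
    obtain ⟨A, hA, hAdisj⟩ := hdisj
    have := hsep C hC
    obtain ⟨x, rfl⟩ := exists_iClusterPts_eq hI hA (fun m n => hAdisj m n) hC hne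
    exact ⟨x, (roughCluster_eq x).symm⟩

theorem stmt6 {X : Type*} [MetricSpace X] [CompactSpace X]
    (I : Set (Set ℕ)) (hI : IsIdeal I)
    (hdisj : ∃ A : ℕ → Set ℕ, (∀ n : ℕ, A n ∉ I) ∧
      (∀ m n : ℕ, m ≠ n → Disjoint (A m) (A n)))
    (F : X → Set X) (hF : IsRoughFamily F) (hFcl : ∀ η : X, IsClosed (F η)) :
    {S : Set X | ∃ x : ℕ → X, S = RoughCluster I F x} =
      {S : Set X | ∃ C : Set X, IsClosed C ∧ C.Nonempty ∧
        S = {η : X | (F η ∩ C).Nonempty}} :=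
  stmt6_general (fun _ _ => inferInstance) I hI hdisj F fun η => (hFcl η).isCompact
end

section
/- Let x : ℕ → X be a sequence in a topological space X, let I be an ideal on ℕ, and let 𝓕 be a rough family on X all of whose members are closed sets, such that the map η ↦ F_η is upper Vietoris continuous. Then Γ_x(I,𝓕) is a closed subset of X. -/
open Set Filter Topology Metric

theorem UpperVietorisContinuous.isOpen_setOf_subset {X : Type*} [TopologicalSpace X]
    {F : X → Set X} (hF : UpperVietorisContinuous F) {U : Set X} (hU : IsOpen U) :
    IsOpen {η | F η ⊆ U} := by
  rw [isOpen_iff_forall_mem_open]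
  intro η hFU
  obtain ⟨V, hV, hηV, hVU⟩ := hF η U hU hFU
  exact ⟨V, hVU, hV, hηV⟩

theorem roughCluster_eq_iInter_compl {X : Type*} [TopologicalSpace X]
    (I : Set (Set ℕ)) (F : X → Set X) (x : ℕ → X) :
    RoughCluster I F x =
      ⋂ (U : Set X) (_ : IsOpen U) (_ : x ⁻¹' U ∈ I), {η | F η ⊆ U}ᶜ := by
  ext η
  simp only [RoughCluster, mem_iInter, mem_compl_iff, mem_ofPred_eq]
  exact forall₂_congr fun _ _ => imp_not_comm

theorem stmt7_general {X : Type*} [TopologicalSpace X] (I : Set (Set ℕ)) {F : X → Set X}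
    (hF : UpperVietorisContinuous F) (x : ℕ → X) : IsClosed (RoughCluster I F x) := by
  rw [roughCluster_eq_iInter_compl]
  exact isClosed_iInter fun _ => isClosed_iInter fun hU => isClosed_iInter fun _ =>
    (hF.isOpen_setOf_subset hU).isClosed_compl

theorem stmt7 {X : Type*} [TopologicalSpace X]
    (I : Set (Set ℕ)) (hI : IsIdeal I)
    (F : X → Set X) (hF : IsRoughFamily F) (hFcl : ∀ η : X, IsClosed (F η))
    (hcont : UpperVietorisContinuous F) (x : ℕ → X) :
    IsClosed (RoughCluster I F x) :=
  stmt7_general I hcont x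
end

section
/- Let I be an ideal on ℕ, let X be a metric space with the UC-property, fix a point η ∈ X, and let 𝓕 be a rough family on X such that F_η is closed. Then for every sequence x : ℕ → X, η ∈ Λ_x(I,𝓕) if and only if 0 is a classical I-limit point of the real sequence (dist(x n, F_η))_{n ∈ ℕ}, i.e., there exists an I-positive set S ⊆ ℕ such that dist(x n, F_η) → 0 along S. -/
open Set Filter Topology Metric

/-!
In terms of filters, `η` is a rough limit point of `x` iff `x` tends, along some `I`-positive set,
to the filter `𝓝ˢ (F η)` of neighbourhoods of `F η`. The UC-property says precisely that the
neighbourhoods of a closed set are the sets containing one of its thickenings, so that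
`𝓝ˢ (F η)` is the pullback of `𝓝 0` under the distance to `F η`.
-/

section LimitPoints

variable {X : Type*} [TopologicalSpace X] {I : Set (Set ℕ)} {x : ℕ → X} {η : X}

theorem mem_roughLimitPts_iff_tendsto_nhdsSet {F : X → Set X} :
    η ∈ RoughLimitPts I F x ↔ ∃ S ∉ I, Tendsto x (cofinite ⊓ 𝓟 S) (𝓝ˢ (F η)) := by
  simp only [RoughLimitPts, mem_ofPred_eq, (hasBasis_nhdsSet _).tendsto_right_iff,
    eventually_inf_principal, eventually_cofinite, Classical.not_imp, and_imp]

theorem mem_iLimitPts_iff_tendsto_nhds :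
    η ∈ ILimitPts I x ↔ ∃ S ∉ I, Tendsto x (cofinite ⊓ 𝓟 S) (𝓝 η) := by
  simp only [ILimitPts, mem_roughLimitPts_iff_tendsto_nhdsSet, nhdsSet_singleton]

end LimitPoints

theorem hasBasis_comap_infDist_nhds_zero {X : Type*} [PseudoMetricSpace X] {s : Set X}
    (hs : s.Nonempty) :
    (comap (infDist · s) (𝓝 0)).HasBasis (fun δ : ℝ => 0 < δ) (thickening · s) := by
  refine (nhds_basis_ball.comap _).congr (fun _ => Iff.rfl) fun δ _ => ?_
  ext y
  simp only [mem_preimage, mem_ball_zero_iff, Real.norm_of_nonneg infDist_nonneg,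
    mem_thickening_iff_infDist_lt hs]

namespace HasUCProperty

variable {X : Type*} [MetricSpace X] {s U : Set X}

theorem exists_thickening_subset_open (hUC : HasUCProperty X) (hs : IsClosed s) (hU : IsOpen U)
    (hsU : s ⊆ U) : ∃ δ : ℝ, 0 < δ ∧ thickening δ s ⊆ U := by
  rcases s.eq_empty_or_nonempty with rfl | hs_nonempty
  · exact ⟨1, one_pos, (thickening_empty 1).trans_subset (empty_subset U)⟩
  rcases Uᶜ.eq_empty_or_nonempty with hU_compl | hU_compl
  · exact ⟨1, one_pos, compl_empty_iff.mp hU_compl ▸ subset_univ _⟩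
  obtain ⟨ε, hε, h_lt_dist⟩ := hUC s Uᶜ hs hU.isClosed_compl hs_nonempty hU_compl
    (disjoint_compl_right_iff_subset.mpr hsU)
  refine ⟨ε, hε, fun y hy => ?_⟩
  obtain ⟨z, hz, hyz⟩ := mem_thickening_iff.mp hy
  by_contra hyU
  exact (h_lt_dist z hz y hyU).not_gt (dist_comm y z ▸ hyz)

theorem hasBasis_nhdsSet_thickening (hUC : HasUCProperty X) (hs : IsClosed s) :
    (𝓝ˢ s).HasBasis (fun δ : ℝ => 0 < δ) (thickening · s) :=
  (hasBasis_nhdsSet s).to_hasBasis'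
    (fun _ hU => hUC.exists_thickening_subset_open hs hU.1 hU.2)
    fun _ => thickening_mem_nhdsSet s

theorem nhdsSet_eq_comap_infDist (hUC : HasUCProperty X) (hs : IsClosed s)
    (hs_nonempty : s.Nonempty) : 𝓝ˢ s = comap (infDist · s) (𝓝 0) :=
  (hUC.hasBasis_nhdsSet_thickening hs).eq_of_same_basis
    (hasBasis_comap_infDist_nhds_zero hs_nonempty)

end HasUCProperty

theorem stmt12_general {X : Type*} [MetricSpace X] (hUC : HasUCProperty X) (I : Set (Set ℕ))
    (F : X → Set X) (η : X) (hFcl : IsClosed (F η)) (hFne : (F η).Nonempty) (x : ℕ → X) :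
    η ∈ RoughLimitPts I F x ↔ 0 ∈ ILimitPts I (fun n => infDist (x n) (F η)) := by
  simp only [mem_roughLimitPts_iff_tendsto_nhdsSet, mem_iLimitPts_iff_tendsto_nhds,
    hUC.nhdsSet_eq_comap_infDist hFcl hFne, tendsto_comap_iff, Function.comp_def]

theorem stmt12 {X : Type*} [MetricSpace X] (hUC : HasUCProperty X)
    (I : Set (Set ℕ)) (hI : IsIdeal I)
    (F : X → Set X) (hF : IsRoughFamily F)
    (η : X) (hFcl : IsClosed (F η)) :
    ∀ x : ℕ → X,
      η ∈ RoughLimitPts I F x ↔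
        0 ∈ ILimitPts I (fun n : ℕ => Metric.infDist (x n) (F η)) := by
  exact stmt12_general hUC I F η hFcl ⟨η, hF η⟩
end

section
/- Let X be a metric space that does not have the UC-property. Then there exist a nonempty closed set F ⊆ X and a sequence x : ℕ → X such that dist(x n, F) < 2^{-n} for all n ∈ ℕ (so in particular dist(x n, F) → 0 as n → ∞), but there is no infinite set S ⊆ ℕ with the property that for every open set U ⊆ X containing F the set {n ∈ S : x n ∉ U} is finite. -/
open Set Filter Topology Metric

section

variable {X : Type*}

theorem finite_of_forall_isOpen_finite_notMem [TopologicalSpace X] {ι : Type*} {F G : Set X}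
    {x : ι → X} {S : Set ι} (hG : IsClosed G) (hFG : Disjoint F G) (hxG : ∀ i ∈ S, x i ∈ G)
    (hfin : ∀ U : Set X, IsOpen U → F ⊆ U → {i ∈ S | x i ∉ U}.Finite) : S.Finite :=
  (hfin Gᶜ hG.isOpen_compl hFG.subset_compl_right).subset
    fun i hi => ⟨hi, notMem_compl_iff.mpr (hxG i hi)⟩

theorem exists_mem_infDist_lt_of_forall_exists_dist_le [PseudoMetricSpace X] {F G : Set X}
    (hclose : ∀ ε : ℝ, 0 < ε → ∃ z ∈ F, ∃ y ∈ G, dist z y ≤ ε) {δ : ℝ} (hδ : 0 < δ) :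
    ∃ y ∈ G, infDist y F < δ := by
  obtain ⟨z, hzF, y, hyG, hzy⟩ := hclose (δ / 2) (half_pos hδ)
  refine ⟨y, hyG, ?_⟩
  calc
    infDist y F ≤ dist y z := infDist_le_dist_of_mem hzF
    _ = dist z y := dist_comm y z
    _ ≤ δ / 2 := hzy
    _ < δ := half_lt_self hδ

theorem exists_disjoint_isClosed_infDist_lt_of_not_hasUCProperty [MetricSpace X]
    (hUC : ¬ HasUCProperty X) :
    ∃ F G : Set X, IsClosed F ∧ IsClosed G ∧ F.Nonempty ∧ Disjoint F G ∧
      ∀ δ : ℝ, 0 < δ → ∃ y ∈ G, infDist y F < δ := by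
  simp only [HasUCProperty] at hUC
  push Not at hUC
  obtain ⟨F, G, hF, hG, hFne, -, hFG, hclose⟩ := hUC
  exact ⟨F, G, hF, hG, hFne, hFG,
    fun _ hδ => exists_mem_infDist_lt_of_forall_exists_dist_le hclose hδ⟩

end

theorem stmt13 {X : Type*} [MetricSpace X] (hUC : ¬ HasUCProperty X) :
    ∃ (F : Set X) (x : ℕ → X), IsClosed F ∧ F.Nonempty ∧
      (∀ n : ℕ, Metric.infDist (x n) F < (2 : ℝ)⁻¹ ^ n) ∧
      ¬ ∃ S : Set ℕ, S.Infinite ∧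
        ∀ U : Set X, IsOpen U → F ⊆ U → {n ∈ S | x n ∉ U}.Finite := by
  obtain ⟨F, G, hF, hG, hFne, hFG, hnear⟩ :=
    exists_disjoint_isClosed_infDist_lt_of_not_hasUCProperty hUC
  choose x hxG hxF using fun n : ℕ => hnear ((2 : ℝ)⁻¹ ^ n) (by positivity)
  refine ⟨F, x, hF, hFne, hxF, ?_⟩
  rintro ⟨S, hSinf, hSfin⟩
  exact hSinf (finite_of_forall_isOpen_finite_notMem hG hFG (fun n _ => hxG n) hSfin)
end

section
/- There exist a compact metric space X, an ideal I on ℕ, a rough family 𝓕 on X all of whose members are closed sets, and a sequence x : ℕ → X such that Lim_x(I*,𝓕) = ∅ while Lim_x(I,𝓕) = Γ_x(I,𝓕) = Λ_x(I,𝓕) = X. -/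
open Set Filter Topology Metric

/-!
Split `ℕ` into infinitely many infinite columns, the fibres of `g : ℕ → ℕ`, and let `I` be the ideal
generated by the columns, that is, the ideal dual to `comap g atTop` (a copy of `Fin × ∅`). If `a`
is an injective sequence converging to `z`, then `x = a ∘ g`, which is constantly `a i` on the
`i`-th column, `I`-converges to `z`, and converges to `z` in the usual sense along any set that
meets each column once. With `F η = {z, η}` this gives the three equalities with the whole space.
On the other hand, a set `S ∈ I` misses all but finitely many columns, so `I*`-convergence of `x` to
`η` would force `a i ∈ F η` for all large `i`, which is impossible since `F η` is finite.
-/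

/-- The ideal dual to a filter `l`, consisting of the complements of the members of `l`. It turns
statements about ideal convergence into statements about `Tendsto`. -/
def dualIdeal (l : Filter ℕ) : Set (Set ℕ) :=
  {A | Aᶜ ∈ l}

theorem isIdeal_dualIdeal {l : Filter ℕ} [l.NeBot] (hl : l ≤ cofinite) : IsIdeal (dualIdeal l) := by
  refine ⟨fun A B hAB hB => ?_, fun A B hA hB => ?_, fun A hA => ?_, fun huniv => ?_⟩
  · exact mem_of_superset hB (compl_subset_compl.2 hAB)
  · exact mem_of_superset (inter_mem hA hB) (compl_union A B).ge
  · exact hl hA.compl_mem_cofinite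
  · exact empty_notMem l (mem_of_superset huniv compl_univ.le)

section RoughConvergence

variable {X : Type*} [TopologicalSpace X] {F : X → Set X} {x : ℕ → X} {z η : X}

theorem mem_roughLim_dualIdeal_of_tendsto {l : Filter ℕ} (hx : Tendsto x l (𝓝 z)) (hz : z ∈ F η) :
    η ∈ RoughLim (dualIdeal l) F x := by
  intro U hU hFU
  filter_upwards [hx (hU.mem_nhds (hFU hz))] with n hn using not_not_intro hn

theorem roughLim_subset_roughCluster {I : Set (Set ℕ)} (hI : IsIdeal I) :
    RoughLim I F x ⊆ RoughCluster I F x := by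
  obtain ⟨-, union_mem, -, univ_notMem⟩ := hI
  intro η hη U hU hFU hmem
  have cover : {n | x n ∈ U} ∪ {n | x n ∉ U} = univ := union_compl_self {n | x n ∈ U}
  exact univ_notMem (cover ▸ union_mem _ _ hmem (hη U hU hFU))

theorem mem_roughLimitPts_of_tendsto_comp {I : Set (Set ℕ)} {s : ℕ → ℕ} (hs : range s ∉ I)
    (hxs : Tendsto (x ∘ s) atTop (𝓝 z)) (hz : z ∈ F η) : η ∈ RoughLimitPts I F x := by
  refine ⟨range s, hs, fun U hU hFU => ?_⟩
  have finite_outside : {i | x (s i) ∉ U}.Finite := by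
    rw [← Nat.cofinite_eq_atTop] at hxs
    exact hxs (hU.mem_nhds (hFU hz))
  refine (finite_outside.image s).subset ?_
  rintro _ ⟨⟨i, rfl⟩, hi⟩
  exact ⟨i, hi, rfl⟩

end RoughConvergence

section Columns

variable {g : ℕ → ℕ}

theorem isIdeal_dualIdeal_comap (hg : g.Surjective) : IsIdeal (dualIdeal (comap g atTop)) := by
  have : (comap g atTop).NeBot := atTop_neBot.comap_of_surj hg
  refine isIdeal_dualIdeal ?_
  rw [← Nat.cofinite_eq_atTop]
  exact comap_cofinite_le g

theorem range_notMem_dualIdeal_comap {s : ℕ → ℕ} (hs : Function.RightInverse s g) :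
    range s ∉ dualIdeal (comap g atTop) := by
  intro hmem
  have tendsto_s : Tendsto s atTop (comap g atTop) :=
    tendsto_comap_iff.2 (hs.comp_eq_id ▸ tendsto_id)
  obtain ⟨i, hi⟩ := (tendsto_s.eventually_mem hmem).exists
  exact hi (mem_range_self i)

variable {X : Type*} [TopologicalSpace X] [T1Space X] {F : X → Set X} {a : ℕ → X}

theorem eventually_mem_of_mem_roughLimStar_dualIdeal_comap (hg : ∀ i, (g ⁻¹' {i}).Infinite) {η : X}
    (hη : η ∈ RoughLimStar (dualIdeal (comap g atTop)) F (a ∘ g)) :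
    ∀ᶠ i in atTop, a i ∈ F η := by
  obtain ⟨S, ⟨W, hW, hWS⟩, hfin⟩ := hη
  filter_upwards [hW] with i hiW
  by_contra hi
  have finite_off_S : {n | n ∉ S ∧ (a ∘ g) n ∉ ({a i}ᶜ : Set X)}.Finite :=
    hfin {a i}ᶜ isOpen_compl_singleton (subset_compl_singleton_iff.2 hi)
  refine hg i (finite_off_S.subset ?_)
  rintro n rfl
  exact ⟨hWS hiW, not_not_intro rfl⟩

theorem roughLimStar_dualIdeal_comap_eq_empty (hg : ∀ i, (g ⁻¹' {i}).Infinite) (ha : a.Injective)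
    (hF : ∀ η, (F η).Finite) :
    RoughLimStar (dualIdeal (comap g atTop)) F (a ∘ g) = ∅ := by
  refine eq_empty_of_forall_notMem fun η hη => ?_
  have infinitely_many : {i | a i ∈ F η}.Infinite :=
    Nat.frequently_atTop_iff_infinite.1
      (eventually_mem_of_mem_roughLimStar_dualIdeal_comap hg hη).frequently
  exact infinitely_many ((hF η).preimage ha.injOn)

end Columns

theorem infinite_unpair_fst_fiber (i : ℕ) : ((fun n => (Nat.unpair n).1) ⁻¹' {i}).Infinite :=
  infinite_of_injective_forall_mem (f := Nat.pair i) (fun _ _ h => (Nat.pair_eq_pair.1 h).2)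
    fun j => by simp

theorem exists_injective_tendsto (X : Type*) [TopologicalSpace X] [SeqCompactSpace X] [Infinite X] :
    ∃ (a : ℕ → X) (z : X), a.Injective ∧ Tendsto a atTop (𝓝 z) := by
  obtain ⟨z, φ, hφ, hlim⟩ := SeqCompactSpace.tendsto_subseq (Infinite.natEmbedding X)
  exact ⟨_, z, (Infinite.natEmbedding X).injective.comp hφ.injective, hlim⟩

theorem stmt14_general (X : Type*) [TopologicalSpace X] [T1Space X] [SeqCompactSpace X]
    [Infinite X] :
    ∃ (I : Set (Set ℕ)) (F : X → Set X) (x : ℕ → X),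
      IsIdeal I ∧ IsRoughFamily F ∧ (∀ η : X, IsClosed (F η)) ∧
      RoughLimStar I F x = ∅ ∧
      RoughLim I F x = Set.univ ∧
      RoughCluster I F x = Set.univ ∧
      RoughLimitPts I F x = Set.univ := by
  obtain ⟨a, z, ha, haz⟩ := exists_injective_tendsto X
  let g : ℕ → ℕ := fun n => (Nat.unpair n).1
  let F : X → Set X := fun η => {z, η}
  have hF : ∀ η, (F η).Finite := fun η => toFinite _
  have hz : ∀ η, z ∈ F η := fun η => mem_insert z _
  have hg : ∀ i, (g ⁻¹' {i}).Infinite := infinite_unpair_fst_fiber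
  have hsurj : g.Surjective := fun i => (hg i).nonempty
  have section_g : Function.RightInverse (Function.surjInv hsurj) g :=
    Function.rightInverse_surjInv hsurj
  have hI : IsIdeal (dualIdeal (comap g atTop)) := isIdeal_dualIdeal_comap hsurj
  have hlim : RoughLim (dualIdeal (comap g atTop)) F (a ∘ g) = univ :=
    eq_univ_of_forall fun η => mem_roughLim_dualIdeal_of_tendsto (haz.comp tendsto_comap) (hz η)
  refine ⟨dualIdeal (comap g atTop), F, a ∘ g, hI, fun η => mem_insert_of_mem z rfl,
    fun η => (hF η).isClosed, roughLimStar_dualIdeal_comap_eq_empty hg ha hF, hlim,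
    univ_subset_iff.1 (hlim ▸ roughLim_subset_roughCluster hI), eq_univ_of_forall fun η => ?_⟩
  refine mem_roughLimitPts_of_tendsto_comp (range_notMem_dualIdeal_comap section_g) ?_ (hz η)
  rwa [Function.comp_assoc, section_g.comp_eq_id]

theorem stmt14 :
    ∃ (X : Type) (_ : MetricSpace X), CompactSpace X ∧
      ∃ (I : Set (Set ℕ)) (F : X → Set X) (x : ℕ → X),
        IsIdeal I ∧ IsRoughFamily F ∧ (∀ η : X, IsClosed (F η)) ∧
        RoughLimStar I F x = ∅ ∧
        RoughLim I F x = Set.univ ∧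
        RoughCluster I F x = Set.univ ∧
        RoughLimitPts I F x = Set.univ := by
  have : Infinite (Icc (0 : ℝ) 1) := (Icc_infinite one_pos).to_subtype
  exact ⟨Icc (0 : ℝ) 1, inferInstance, inferInstance, stmt14_general _⟩
end

section
/- Let X = ℝ with its standard topology, let I be an ideal on ℕ, and let 𝓕 be a rough family on ℝ all of whose members are closed sets, uniformly bounded in the sense that there exists r ≥ 0 with F_η ⊆ [η − r, η + r] for all η ∈ ℝ, and such that the map η ↦ F_η is upper Vietoris continuous. Then c^b(I,𝓕) is a closed subset of ℓ∞. -/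
open Set Filter Topology Metric

/-!
Let `x k → y` uniformly and let `η k` be an `(I, F)`-limit of `x k`. Off a set in `I`, the values
`x k n` are within about `r` of `η k`; two such exceptional sets do not cover `ℕ`, so `η k` and
`η l` are at distance at most `2 * r + sup_n dist (x k n) (x l n)`. Hence the `η k` are bounded and
some subsequence converges, to `a` say. If `F a ⊆ U` with `U` open, compactness of `F a` leaves room
for a `δ`-thickening of `F a` inside `U`. Half of `δ` absorbs the passage from `F a` to `F (η k)`,
by upper Vietoris continuity, and the other half the passage from `x k` to `y`.
-/

open scoped UniformConvergence

theorem UpperVietorisContinuous.eventually_subset {X : Type*} [TopologicalSpace X]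
    {F : X → Set X} (hF : UpperVietorisContinuous F) {a : X} {U : Set X} (hU : IsOpen U)
    (hFU : F a ⊆ U) : ∀ᶠ η in 𝓝 a, F η ⊆ U := by
  obtain ⟨V, hV, haV, hVU⟩ := hF a U hU hFU
  filter_upwards [hV.mem_nhds haV] using hVU

section RoughLim

variable {I : Set (Set ℕ)}

theorem IsIdeal.mem_of_subset (hI : IsIdeal I) {A B : Set ℕ} (hB : B ∈ I) (hAB : A ⊆ B) : A ∈ I :=
  hI.1 A B hAB hB

theorem IsIdeal.exists_notMem_and_notMem (hI : IsIdeal I) {A B : Set ℕ} (hA : A ∈ I) (hB : B ∈ I) :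
    ∃ n, n ∉ A ∧ n ∉ B := by
  obtain ⟨-, union_mem, -, univ_notMem⟩ := hI
  obtain ⟨n, hn⟩ := (ne_univ_iff_exists_notMem (A ∪ B)).1
    fun h ↦ univ_notMem (h ▸ union_mem A B hA hB)
  exact ⟨n, not_or.1 hn⟩

variable {X : Type*} [PseudoMetricSpace X] {F : X → Set X}

theorem dist_le_of_mem_roughLim (hI : IsIdeal I) {x y : ℕ → X} {η θ : X} {r s C : ℝ}
    (hη : η ∈ RoughLim I F x) (hθ : θ ∈ RoughLim I F y)
    (hFη : F η ⊆ closedBall η r) (hFθ : F θ ⊆ closedBall θ s)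
    (hxy : ∀ n, dist (x n) (y n) ≤ C) : dist η θ ≤ r + C + s := by
  refine le_of_forall_pos_le_add fun ε hε ↦ ?_
  have hx := hη (ball η (r + ε / 2)) isOpen_ball
    (hFη.trans (closedBall_subset_ball (by linarith)))
  have hy := hθ (ball θ (s + ε / 2)) isOpen_ball
    (hFθ.trans (closedBall_subset_ball (by linarith)))
  obtain ⟨n, hxn, hyn⟩ := hI.exists_notMem_and_notMem hx hy
  have hxη : dist η (x n) < r + ε / 2 := mem_ball'.1 (not_not.1 hxn)
  have hyθ : dist (y n) θ < s + ε / 2 := mem_ball.1 (not_not.1 hyn)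
  calc dist η θ ≤ dist η (x n) + dist (x n) (y n) + dist (y n) θ := dist_triangle4 _ _ _ _
    _ ≤ r + C + s + ε := by linarith [hxy n]

theorem mem_roughLim_of_tendstoUniformly (hI : IsIdeal I) (hF : UpperVietorisContinuous F)
    {ι : Type*} {p : Filter ι} [p.NeBot] {x : ι → ℕ → X} {y : ℕ → X} {η : ι → X} {a : X}
    (hη : ∀ k, η k ∈ RoughLim I F (x k)) (hxy : TendstoUniformly x y p)
    (hηa : Tendsto η p (𝓝 a)) (hFa : IsCompact (F a)) : a ∈ RoughLim I F y := by
  intro U hU hFU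
  obtain ⟨δ, hδ, hδU⟩ := hFa.exists_thickening_subset_open hU hFU
  have hFη : ∀ᶠ k in p, F (η k) ⊆ thickening (δ / 2) (F a) :=
    hηa.eventually (hF.eventually_subset isOpen_thickening (self_subset_thickening (half_pos hδ) _))
  have hclose : ∀ᶠ k in p, ∀ n, dist (y n) (x k n) < δ / 2 :=
    Metric.tendstoUniformly_iff.1 hxy _ (half_pos hδ)
  obtain ⟨k, hFk, hk⟩ := (hFη.and hclose).exists
  refine hI.mem_of_subset (hη k _ isOpen_thickening hFk) fun n hyn hxn ↦ hyn (hδU ?_)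
  have hy : y n ∈ thickening (δ / 2) (thickening (δ / 2) (F a)) :=
    mem_thickening_iff.2 ⟨x k n, hxn, hk n⟩
  simpa only [add_halves] using thickening_thickening_subset _ _ _ hy

theorem exists_tendsto_subseq_of_mem_roughLim [ProperSpace X] (hI : IsIdeal I) {r : ℝ}
    (hbd : ∀ η, F η ⊆ closedBall η r) {x : ℕ → ℕ → X} {y : ℕ → X} {η : ℕ → X}
    (hη : ∀ k, η k ∈ RoughLim I F (x k)) (hxy : TendstoUniformly x y atTop) :
    ∃ a, ∃ φ : ℕ → ℕ, StrictMono φ ∧ Tendsto (η ∘ φ) atTop (𝓝 a) := by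
  have hclose : ∀ᶠ k in atTop, ∀ n, dist (y n) (x k n) < 1 :=
    Metric.tendstoUniformly_iff.1 hxy 1 one_pos
  obtain ⟨K, hK⟩ := hclose.exists
  have hbounded : ∀ᶠ k in atTop, η k ∈ closedBall (η K) (r + 2 + r) := by
    filter_upwards [hclose] with k hk
    refine dist_le_of_mem_roughLim hI (hη k) (hη K) (hbd _) (hbd _) fun n ↦ ?_
    linarith [dist_triangle_left (x k n) (x K n) (y n), hk n, hK n]
  obtain ⟨a, -, φ, hφ, hφa⟩ :=
    tendsto_subseq_of_frequently_bounded isBounded_closedBall hbounded.frequently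
  exact ⟨a, φ, hφ, hφa⟩

theorem stmt15_general [ProperSpace X] (hI : IsIdeal I) (hFcl : ∀ η, IsClosed (F η)) {r : ℝ}
    (hbd : ∀ η, F η ⊆ closedBall η r) (hcont : UpperVietorisContinuous F) :
    IsClosed {x : ℕ →ᵤ X | (RoughLim I F (UniformFun.toFun x)).Nonempty} := by
  refine IsSeqClosed.isClosed fun x y hx hxy ↦ ?_
  choose η hη using hx
  have hunif := UniformFun.tendsto_iff_tendstoUniformly.1 hxy
  obtain ⟨a, φ, hφ, hφa⟩ := exists_tendsto_subseq_of_mem_roughLim hI hbd hη hunif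
  have hsub := UniformFun.tendsto_iff_tendstoUniformly.1 (hxy.comp hφ.tendsto_atTop)
  have hFa : IsCompact (F a) := (isCompact_closedBall a r).of_isClosed_subset (hFcl a) (hbd a)
  exact ⟨a, mem_roughLim_of_tendstoUniformly hI hcont (fun k ↦ hη (φ k)) hsub hφa hFa⟩

end RoughLim

theorem continuous_uniformFun_ofFun_lp {α E : Type*} [NormedAddCommGroup E] {p : ENNReal}
    [Fact (1 ≤ p)] : Continuous fun x : lp (fun _ : α ↦ E) p ↦ UniformFun.ofFun (x : α → E) :=
  (UniformFun.lipschitzWith_ofFun_iff.2 fun i ↦ lp.lipschitzWith_one_eval p i).continuous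

theorem stmt15 (I : Set (Set ℕ)) (hI : IsIdeal I)
    (F : ℝ → Set ℝ) (hF : IsRoughFamily F) (hFcl : ∀ η : ℝ, IsClosed (F η))
    (r : ℝ) (hr : 0 ≤ r) (hbd : ∀ η : ℝ, F η ⊆ Set.Icc (η - r) (η + r))
    (hcont : UpperVietorisContinuous F) :
    IsClosed {x : lp (fun _ : ℕ => ℝ) ⊤ | (RoughLim I F (fun n => x n)).Nonempty} := by
  simp only [← Real.closedBall_eq_Icc] at hbd
  exact (stmt15_general hI hFcl hbd hcont).preimage continuous_uniformFun_ofFun_lp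
end

section
/- Let I be an ideal on ℕ, let X be a compact metric space, and let 𝓕 be a rough family on X all of whose members are closed sets, such that there exist a point η ∈ X and a sequence y : ℕ → X with y converging to η and y k ∉ F_η for all k ∈ ℕ. Then I is a P⁺-ideal if and only if Λ_x(I,𝓕) = Γ_x(I,𝓕) for every sequence x : ℕ → X. -/
open Set Filter Topology Metric

/-!
Both kinds of points are read off the filter `𝓝ˢ (F ξ)`: `ξ` is a cluster point of `x` when every
`x ⁻¹' s` with `s ∈ 𝓝ˢ (F ξ)` is positive, and a limit point when a single positive set is almost
contained in all of these preimages. When `𝓝ˢ (F ξ)` has a countable basis, as it does for compact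
`F ξ`, the P⁺-property produces this set from a decreasing basis.

Conversely, a decreasing sequence `A` of positive sets is encoded in the sequence sending `n` to
`y k`, where `k` is the first index with `n ∉ A k`. It clusters at `η`, and if a positive set `S`
witnesses that `η` is a limit point, then `S` meets `(A k)ᶜ` in a finite set, since there the
sequence takes only the values `y 0, …, y k`, all of which are avoided by a neighbourhood of `F η`.
-/

theorem IsIdeal.notMem_of_sdiff_finite {I : Set (Set ℕ)} (hI : IsIdeal I) {A B : Set ℕ}
    (hA : A ∉ I) (hAB : (A \ B).Finite) : B ∉ I := by
  obtain ⟨mem_of_subset, union_mem, mem_of_finite, -⟩ := hI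
  intro hB
  have hA_subset : A ⊆ A \ B ∪ B := subset_sdiff_union A B
  exact hA (mem_of_subset _ _ hA_subset (union_mem _ _ (mem_of_finite _ hAB) hB))

theorem IsIdeal.notMem_of_subset {I : Set (Set ℕ)} (hI : IsIdeal I) {A B : Set ℕ}
    (hA : A ∉ I) (hAB : A ⊆ B) : B ∉ I :=
  fun hB ↦ hA (hI.1 A B hAB hB)

theorem IsPPlusIdeal.exists_forall_mem_sdiff_finite {I : Set (Set ℕ)} (hP : IsPPlusIdeal I)
    {l : Filter ℕ} [l.IsCountablyGenerated] (hl : ∀ s ∈ l, s ∉ I) :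
    ∃ B ∉ I, ∀ s ∈ l, (B \ s).Finite := by
  obtain ⟨A, hA⟩ := l.exists_antitone_basis
  obtain ⟨B, hB, hBA⟩ := hP A hA.antitone fun k ↦ hl _ (hA.mem k)
  refine ⟨B, hB, fun s hs ↦ ?_⟩
  obtain ⟨k, hk⟩ := hA.mem_iff.1 hs
  exact (hBA k).subset (sdiff_subset_sdiff_right hk)

theorem isCountablyGenerated_nhdsSet_of_isCompact {X : Type*} [UniformSpace X]
    [(uniformity X).IsCountablyGenerated] {K : Set X} (hK : IsCompact K) :
    (𝓝ˢ K).IsCountablyGenerated :=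
  let ⟨_, hV⟩ := (uniformity X).exists_antitone_basis
  (hK.nhdsSet_basis_uniformity hV.toHasBasis).isCountablyGenerated

section RoughPoints

variable {X : Type*} [TopologicalSpace X] {I : Set (Set ℕ)} {F : X → Set X} {x : ℕ → X} {ξ : X}

theorem mem_roughCluster_iff_nhdsSet (hI : IsIdeal I) :
    ξ ∈ RoughCluster I F x ↔ ∀ s ∈ 𝓝ˢ (F ξ), x ⁻¹' s ∉ I := by
  refine ⟨fun hξ s hs ↦ ?_, fun hξ U hU hFU ↦ hξ U (hU.mem_nhdsSet.2 hFU)⟩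
  obtain ⟨U, hU, hFU, hUs⟩ := mem_nhdsSet_iff_exists.1 hs
  exact hI.notMem_of_subset (hξ U hU hFU) (preimage_mono hUs)

theorem mem_roughLimitPts_iff_nhdsSet :
    ξ ∈ RoughLimitPts I F x ↔ ∃ S ∉ I, ∀ s ∈ 𝓝ˢ (F ξ), (S \ x ⁻¹' s).Finite := by
  refine ⟨fun ⟨S, hS, hSU⟩ ↦ ⟨S, hS, fun s hs ↦ ?_⟩,
    fun ⟨S, hS, hSs⟩ ↦ ⟨S, hS, fun U hU hFU ↦ hSs U (hU.mem_nhdsSet.2 hFU)⟩⟩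
  obtain ⟨U, hU, hFU, hUs⟩ := mem_nhdsSet_iff_exists.1 hs
  exact (hSU U hU hFU).subset (sdiff_subset_sdiff_right (preimage_mono hUs))

theorem roughLimitPts_subset_roughCluster (hI : IsIdeal I) :
    RoughLimitPts I F x ⊆ RoughCluster I F x :=
  fun _ ⟨_, hS, hSU⟩ U hU hFU ↦ hI.notMem_of_sdiff_finite hS (hSU U hU hFU)

theorem IsPPlusIdeal.mem_roughLimitPts (hP : IsPPlusIdeal I) (hI : IsIdeal I)
    [(𝓝ˢ (F ξ)).IsCountablyGenerated] (hξ : ξ ∈ RoughCluster I F x) :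
    ξ ∈ RoughLimitPts I F x := by
  rw [mem_roughCluster_iff_nhdsSet hI] at hξ
  have comap_positive : ∀ A ∈ comap x (𝓝ˢ (F ξ)), A ∉ I := fun A ⟨s, hs, hsA⟩ ↦
    hI.notMem_of_subset (hξ s hs) hsA
  obtain ⟨S, hS, hSA⟩ := hP.exists_forall_mem_sdiff_finite comap_positive
  exact mem_roughLimitPts_iff_nhdsSet.2 ⟨S, hS, fun s hs ↦ hSA _ (preimage_mem_comap hs)⟩

end RoughPoints

/-- The first index `k` with `n ∉ A k`, truncated at `n` so that it is also meaningful for `n` in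
the intersection of all `A k`. Composing with it turns a decreasing sequence of sets into a
sequence of points. -/
noncomputable def exitIndex (A : ℕ → Set ℕ) (n : ℕ) : ℕ :=
  sInf {k | n ∉ A k ∨ n ≤ k}

theorem exitIndex_le_of_notMem {A : ℕ → Set ℕ} {n k : ℕ} (hn : n ∉ A k) : exitIndex A n ≤ k :=
  Nat.sInf_le (Or.inl hn)

theorem le_exitIndex_of_mem {A : ℕ → Set ℕ} (hA : Antitone A) {n k : ℕ} (hn : n ∈ A k)
    (hkn : k ≤ n) : k ≤ exitIndex A n := by
  refine le_csInf ⟨n, Or.inr le_rfl⟩ ?_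
  rintro j (hnj | hnj)
  · exact le_of_not_ge fun hjk ↦ hnj (hA hjk hn)
  · exact hkn.trans hnj

section Encoding

variable {X : Type*} [TopologicalSpace X] {I : Set (Set ℕ)} {F : X → Set X} {η : X} {y : ℕ → X}
  {A : ℕ → Set ℕ}

theorem mem_roughCluster_comp_exitIndex (hI : IsIdeal I) (hy : Tendsto y atTop (𝓝ˢ (F η)))
    (hA : Antitone A) (hApos : ∀ k, A k ∉ I) : η ∈ RoughCluster I F (y ∘ exitIndex A) := by
  rw [mem_roughCluster_iff_nhdsSet hI]
  intro s hs
  obtain ⟨k, hk⟩ := eventually_atTop.1 (hy hs)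
  refine hI.notMem_of_sdiff_finite (hApos k) ((finite_Iio k).subset ?_)
  rintro n ⟨hnA, hns⟩
  exact lt_of_not_ge fun hkn ↦ hns (hk _ (le_exitIndex_of_mem hA hnA hkn))

theorem exists_forall_sdiff_finite_of_mem_roughLimitPts (hyF : ∀ k, {y k}ᶜ ∈ 𝓝ˢ (F η))
    (hη : η ∈ RoughLimitPts I F (y ∘ exitIndex A)) : ∃ B ∉ I, ∀ k, (B \ A k).Finite := by
  obtain ⟨B, hB, hBs⟩ := mem_roughLimitPts_iff_nhdsSet.1 hη
  refine ⟨B, hB, fun k ↦ ?_⟩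
  have avoid_mem : ⋂ j ∈ Iic k, {y j}ᶜ ∈ 𝓝ˢ (F η) :=
    (biInter_mem (finite_Iic k)).2 fun j _ ↦ hyF j
  refine (hBs _ avoid_mem).subset (sdiff_subset_sdiff_right fun n hn ↦ ?_)
  by_contra hnA
  exact mem_iInter₂.1 hn _ (exitIndex_le_of_notMem hnA) rfl

end Encoding

theorem stmt19_general {X : Type*} [TopologicalSpace X] [T1Space X]
    {I : Set (Set ℕ)} (hI : IsIdeal I) {F : X → Set X}
    (hFcount : ∀ ξ, (𝓝ˢ (F ξ)).IsCountablyGenerated)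
    {η : X} {y : ℕ → X} (hy : Tendsto y atTop (𝓝ˢ (F η))) (hyF : ∀ k, y k ∉ F η) :
    IsPPlusIdeal I ↔ ∀ x : ℕ → X, RoughLimitPts I F x = RoughCluster I F x := by
  refine ⟨fun hP x ↦ ?_, fun h A hA hApos ↦ ?_⟩
  · exact (roughLimitPts_subset_roughCluster hI).antisymm fun ξ hξ ↦
      have := hFcount ξ
      hP.mem_roughLimitPts hI hξ
  · have hη : η ∈ RoughLimitPts I F (y ∘ exitIndex A) :=
      h _ ▸ mem_roughCluster_comp_exitIndex hI hy hA hApos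
    exact exists_forall_sdiff_finite_of_mem_roughLimitPts
      (fun k ↦ compl_singleton_mem_nhdsSet_iff.2 (hyF k)) hη

theorem stmt19 {X : Type*} [MetricSpace X] [CompactSpace X]
    (I : Set (Set ℕ)) (hI : IsIdeal I)
    (F : X → Set X) (hF : IsRoughFamily F) (hFcl : ∀ η : X, IsClosed (F η))
    (η : X) (y : ℕ → X) (hy : Filter.Tendsto y Filter.atTop (nhds η))
    (hyF : ∀ k : ℕ, y k ∉ F η) :
    IsPPlusIdeal I ↔ ∀ x : ℕ → X, RoughLimitPts I F x = RoughCluster I F x := by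
  exact stmt19_general hI (fun ξ ↦ isCountablyGenerated_nhdsSet_of_isCompact (hFcl ξ).isCompact)
    (hy.mono_right (nhds_le_nhdsSet (hF η))) hyF
end
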